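/- arXiv:2212.11225 — 2 statements merged into one kernel-verified Lean document; each statement's English description precedes it below -/
import Mathlib

section
/- Let I ∈ Ins({0},ℂ²,ℂ²) be the one-outcome identity instrument (the identity channel on ℂ²) and let J ∈ Ins({0,1,2,3},ℂ²,ℂ²) be the instrument J_i(ρ) = (1/4) σ_i ρ σ_i, where σ_0 = I and σ_1, σ_2, σ_3 are the Pauli matrices. Then I and J are incompatible, although Φ^I and Φ^J are compatible channels and A^I and A^J are compatible POVMs. (The incompatibility follows because a joint instrument G for I and J would yield the channel E(ρ) = Σ_i (I⊗σ_i) G_i(ρ) (I⊗σ_i) satisfying Tr_{second factor}[E(ρ)] = ρ and Tr_{first factor}[E(ρ)] = ρ for all states ρ, i.e. a perfect broadcasting channel, which does not exist.) -/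
open scoped Kronecker ComplexOrder
open Matrix

noncomputable section

/-- Linear maps between matrix algebras, representing super-operators
`L(H) → L(K)` for finite-dimensional Hilbert spaces with index types `dH`, `dK`. -/
abbrev MatMap (dH dK : Type) : Type := Matrix dH dH ℂ →ₗ[ℂ] Matrix dK dK ℂ

variable {Ω Λ dH dK dV dA dA' : Type}

/-- The Choi matrix of a super-operator. -/
def choiMatrix [DecidableEq dH] (Φ : MatMap dH dK) : Matrix (dH × dK) (dH × dK) ℂ :=
  fun p q => Φ (Matrix.single p.1 q.1 1) p.2 q.2

/-- Complete positivity of a super-operator (positivity of its Choi matrix). -/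
def IsCP [Fintype dH] [DecidableEq dH] [Fintype dK] (Φ : MatMap dH dK) : Prop :=
  (choiMatrix Φ).PosSemidef

/-- A quantum state: a positive semidefinite matrix of unit trace. -/
def IsState [Fintype dH] (ρ : Matrix dH dH ℂ) : Prop := ρ.PosSemidef ∧ ρ.trace = 1

/-- Trace-nonincreasing super-operator. -/
def IsTNI [Fintype dH] [Fintype dK] (Φ : MatMap dH dK) : Prop :=
  ∀ ρ : Matrix dH dH ℂ, ρ.PosSemidef → (Φ ρ).trace ≤ ρ.trace

/-- Trace-preserving super-operator. -/
def IsTP [Fintype dH] [Fintype dK] (Φ : MatMap dH dK) : Prop :=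
  ∀ ρ : Matrix dH dH ℂ, (Φ ρ).trace = ρ.trace

/-- A quantum instrument with outcome set `Ω` from system `dH` to system `dK`:
a family of completely positive trace-nonincreasing maps summing to a channel. -/
structure Instrument (Ω dH dK : Type) [Fintype Ω] [Fintype dH] [DecidableEq dH]
    [Fintype dK] : Type where
  op : Ω → MatMap dH dK
  cp : ∀ x, IsCP (op x)
  tni : ∀ x, IsTNI (op x)
  tp : IsTP (∑ x, op x)

/-- A quantum channel: a completely positive trace-preserving super-operator. -/
structure Channel (dH dK : Type) [Fintype dH] [DecidableEq dH] [Fintype dK] : Type where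
  map : MatMap dH dK
  cp : IsCP map
  tp : IsTP map

/-- A POVM with outcome set `Ω` on system `d`. -/
structure POVM (Ω d : Type) [Fintype Ω] [Fintype d] [DecidableEq d] : Type where
  elem : Ω → Matrix d d ℂ
  pos : ∀ x, (elem x).PosSemidef
  sum_eq : ∑ x, elem x = 1

/-- The effect (induced POVM element) of an operation `Φ`:
the unique matrix `A` with `tr[A ρ] = tr[Φ ρ]` for all `ρ`. -/
def dualId [Fintype dH] [DecidableEq dH] [Fintype dK] (Φ : MatMap dH dK) :
    Matrix dH dH ℂ :=
  fun i j => (Φ (Matrix.single j i 1)).trace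

/-- Partial trace over the first tensor factor. -/
def ptraceL [Fintype dA] (M : Matrix (dA × dK) (dA × dK) ℂ) : Matrix dK dK ℂ :=
  fun i j => ∑ a, M (a, i) (a, j)

/-- Partial trace over the second tensor factor. -/
def ptraceR [Fintype dV] (M : Matrix (dK × dV) (dK × dV) ℂ) : Matrix dK dK ℂ :=
  fun i j => ∑ b, M (i, b) (j, b)

/-- Compatibility of two instruments: existence of a joint instrument whose
partial-trace marginals (summed over the other outcome) reproduce both instruments
on all states. -/
def InsCompatible [Fintype Ω] [Fintype Λ] [Fintype dH] [DecidableEq dH] [Fintype dK]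
    [Fintype dV] (I : Instrument Ω dH dK) (J : Instrument Λ dH dV) : Prop :=
  ∃ G : Instrument (Ω × Λ) dH (dK × dV),
    (∀ y, ∀ ρ : Matrix dH dH ℂ, IsState ρ → ∑ x, ptraceL (G.op (x, y) ρ) = J.op y ρ) ∧
    (∀ x, ∀ ρ : Matrix dH dH ℂ, IsState ρ → ∑ y, ptraceR (G.op (x, y) ρ) = I.op x ρ)

/-- Compatibility of an instrument and a channel (a one-outcome instrument). -/
def InsChCompatible [Fintype Ω] [Fintype dH] [DecidableEq dH] [Fintype dK] [Fintype dV]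
    (I : Instrument Ω dH dK) (Ψ : Channel dH dV) : Prop :=
  ∃ G : Instrument Ω dH (dK × dV),
    (∀ ρ : Matrix dH dH ℂ, IsState ρ → ∑ x, ptraceL (G.op x ρ) = Ψ.map ρ) ∧
    (∀ x, ∀ ρ : Matrix dH dH ℂ, IsState ρ → ptraceR (G.op x ρ) = I.op x ρ)

/-- Compatibility of two channels. -/
def ChCompatible [Fintype dH] [DecidableEq dH] [Fintype dK] [Fintype dV]
    (Φ : Channel dH dK) (Ψ : Channel dH dV) : Prop :=
  ∃ Γ : Channel dH (dK × dV),
    (∀ ρ : Matrix dH dH ℂ, IsState ρ → ptraceL (Γ.map ρ) = Ψ.map ρ) ∧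
    (∀ ρ : Matrix dH dH ℂ, IsState ρ → ptraceR (Γ.map ρ) = Φ.map ρ)

/-- Compatibility of a POVM and an instrument: existence of a joint instrument `G`
with `∑ x, G.op (x, y) = J.op y` and whose induced POVM has the POVM `A` as a margin. -/
def POVMInsCompatible [Fintype Ω] [Fintype Λ] [Fintype dH] [DecidableEq dH] [Fintype dK]
    (A : POVM Ω dH) (J : Instrument Λ dH dK) : Prop :=
  ∃ G : Instrument (Ω × Λ) dH dK,
    (∀ y, ∑ x, G.op (x, y) = J.op y) ∧
    (∀ x, ∑ y, dualId (G.op (x, y)) = A.elem x)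

/-- Compatibility (joint measurability) of two POVMs. -/
def POVMCompatible [Fintype Ω] [Fintype Λ] [Fintype dH] [DecidableEq dH]
    (A : POVM Ω dH) (B : POVM Λ dH) : Prop :=
  ∃ G : POVM (Ω × Λ) dH,
    (∀ y, ∑ x, G.elem (x, y) = B.elem y) ∧
    (∀ x, ∑ y, G.elem (x, y) = A.elem x)

/-- Compatibility of a POVM and a channel: existence of an instrument implementing both. -/
def POVMChCompatible [Fintype Ω] [Fintype dH] [DecidableEq dH] [Fintype dK]
    (A : POVM Ω dH) (Ψ : Channel dH dK) : Prop :=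
  ∃ G : Instrument Ω dH dK,
    (∑ x, G.op x) = Ψ.map ∧ ∀ x, dualId (G.op x) = A.elem x

/-- Instrument postprocessing: `I ⪯ J` if `I_x = ∑ y, R^(y)_x ∘ J_y` for
a family of instruments `R^(y)`. -/
def Postprocessed [Fintype Ω] [Fintype Λ] [Fintype dH] [DecidableEq dH] [Fintype dK]
    [Fintype dV] [DecidableEq dV] (I : Instrument Ω dH dK) (J : Instrument Λ dH dV) : Prop :=
  ∃ R : Λ → Instrument Ω dV dK, ∀ x, I.op x = ∑ y, (R y).op x ∘ₗ J.op y

/-- An instrument `I` does not disturb an instrument `J`: `J_y ∘ Φ^I = J_y`. -/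
def NonDisturbs [Fintype Ω] [Fintype Λ] [Fintype dH] [DecidableEq dH] [Fintype dV]
    (I : Instrument Ω dH dH) (J : Instrument Λ dH dV) : Prop :=
  ∀ y, J.op y ∘ₗ (∑ x, I.op x) = J.op y

/-- An instrument `I` does not disturb a channel `Ψ`: `Ψ ∘ Φ^I = Ψ`. -/
def InsNonDisturbsCh [Fintype Ω] [Fintype dH] [DecidableEq dH] [Fintype dV]
    (I : Instrument Ω dH dH) (Ψ : Channel dH dV) : Prop :=
  Ψ.map ∘ₗ (∑ x, I.op x) = Ψ.map

/-- An instrument `I` does not disturb a POVM `A`: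
the statistics of `A` are unchanged by the channel induced by `I`. -/
def InsNonDisturbsPOVM [Fintype Ω] [Fintype Λ] [Fintype dH] [DecidableEq dH]
    (I : Instrument Ω dH dH) (A : POVM Λ dH) : Prop :=
  ∀ y, ∀ ρ : Matrix dH dH ℂ,
    (A.elem y * ((∑ x, I.op x) ρ)).trace = (A.elem y * ρ).trace

/-- A POVM `A` does not disturb an instrument `J`: some instrument measuring `A`
does not disturb `J`. -/
def POVMNonDisturbs [Fintype Ω] [Fintype Λ] [Fintype dH] [DecidableEq dH] [Fintype dV]
    (A : POVM Ω dH) (J : Instrument Λ dH dV) : Prop :=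
  ∃ I : Instrument Ω dH dH, (∀ x, dualId (I.op x) = A.elem x) ∧ NonDisturbs I J

/-- A POVM `A` does not disturb a channel `Ψ`. -/
def POVMNonDisturbsCh [Fintype Ω] [Fintype dH] [DecidableEq dH] [Fintype dV]
    (A : POVM Ω dH) (Ψ : Channel dH dV) : Prop :=
  ∃ I : Instrument Ω dH dH, (∀ x, dualId (I.op x) = A.elem x) ∧ InsNonDisturbsCh I Ψ

/-- A POVM `A` does not disturb a POVM `B`. -/
def POVMNonDisturbsPOVM [Fintype Ω] [Fintype Λ] [Fintype dH] [DecidableEq dH]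
    (A : POVM Ω dH) (B : POVM Λ dH) : Prop :=
  ∃ I : Instrument Ω dH dH, (∀ x, dualId (I.op x) = A.elem x) ∧ InsNonDisturbsPOVM I B

/-- A sharp (projection-valued) POVM. -/
def IsSharp [Fintype Ω] [Fintype dH] [DecidableEq dH] (A : POVM Ω dH) : Prop :=
  ∀ x, A.elem x * A.elem x = A.elem x

/-- `(H_A, W, E)` is a dilation of the instrument `I`:
`W` is an isometry `H → H_A ⊗ K` and
`I_x(ρ) = Tr_{H_A}[W ρ W* (E(x) ⊗ 1_K)]` on all states. -/
def IsDilation [Fintype Ω] [Fintype dH] [DecidableEq dH] [Fintype dK] [DecidableEq dK]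
    [Fintype dA] [DecidableEq dA] (I : Instrument Ω dH dK)
    (W : Matrix (dA × dK) dH ℂ) (E : POVM Ω dA) : Prop :=
  Wᴴ * W = 1 ∧
  ∀ x, ∀ ρ : Matrix dH dH ℂ, IsState ρ →
    I.op x ρ = ptraceL (W * ρ * Wᴴ * (E.elem x ⊗ₖ (1 : Matrix dK dK ℂ)))

/-- Minimality of a Stinespring isometry `W : H → H_A ⊗ K`:
the span of `{(1 ⊗ B) W φ}` is everything. -/
def IsMinimalW [Fintype dH] [Fintype dK] [DecidableEq dK] [Fintype dA] [DecidableEq dA]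
    (W : Matrix (dA × dK) dH ℂ) : Prop :=
  Submodule.span ℂ {v : (dA × dK) → ℂ |
    ∃ (B : Matrix dK dK ℂ) (φ : dH → ℂ),
      v = ((1 : Matrix dA dA ℂ) ⊗ₖ B) *ᵥ (W *ᵥ φ)} = ⊤

open scoped MatrixOrder in
/-- `IC` is the complementary instrument of the instrument dilated by `(W, E)`:
`IC_x(ρ) = Tr_K[(√E(x) ⊗ 1) W ρ W* (√E(x) ⊗ 1)]`. -/
def IsComplementaryOf [Fintype Ω] [Fintype dH] [DecidableEq dH] [Fintype dK]
    [DecidableEq dK] [Fintype dA] [DecidableEq dA] (W : Matrix (dA × dK) dH ℂ) (E : POVM Ω dA)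
    (IC : Instrument Ω dH dA) : Prop :=
  ∀ x, ∀ ρ : Matrix dH dH ℂ,
    IC.op x ρ =
      ptraceR ((CFC.sqrt (E.elem x) ⊗ₖ (1 : Matrix dK dK ℂ)) * (W * ρ * Wᴴ) *
        (CFC.sqrt (E.elem x) ⊗ₖ (1 : Matrix dK dK ℂ)))

/-- A measure-and-prepare instrument: `I_x(ρ) = tr[A(x) ρ] ξ_x`. -/
def IsMeasureAndPrepare [Fintype Ω] [Fintype dH] [DecidableEq dH] [Fintype dK]
    [DecidableEq dK] (I : Instrument Ω dH dK) : Prop :=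
  ∃ (A : POVM Ω dH) (ξ : Ω → Matrix dK dK ℂ),
    (∀ x, IsState (ξ x)) ∧
    ∀ x, ∀ ρ : Matrix dH dH ℂ, I.op x ρ = ((A.elem x * ρ).trace) • ξ x

/-- A pure state: a state which is a (rank-one) projection. -/
def IsPureState [Fintype dK] (ρ : Matrix dK dK ℂ) : Prop :=
  IsState ρ ∧ ρ * ρ = ρ

/-- A rank-1 POVM: every effect has rank at most one. -/
def IsRankOnePOVM [Fintype Ω] [Fintype dH] [DecidableEq dH] (A : POVM Ω dH) : Prop :=
  ∀ x, (A.elem x).rank ≤ 1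

/-- POVM postprocessing: `B(y) = ∑ x, ν x y • A(x)` for a stochastic matrix `ν`. -/
def POVMPostprocessed [Fintype Ω] [Fintype Λ] [Fintype dH] [DecidableEq dH]
    (B : POVM Λ dH) (A : POVM Ω dH) : Prop :=
  ∃ ν : Ω → Λ → ℝ, (∀ x y, 0 ≤ ν x y) ∧ (∀ x, ∑ y, ν x y = 1) ∧
    ∀ y, B.elem y = ∑ x, (ν x y : ℂ) • A.elem x

/-- A measure-and-prepare instrument preparing pure states. -/
def IsMeasureAndPreparePure [Fintype Ω] [Fintype dH] [DecidableEq dH] [Fintype dK]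
    [DecidableEq dK] (I : Instrument Ω dH dK) : Prop :=
  ∃ (A : POVM Ω dH) (ξ : Ω → Matrix dK dK ℂ),
    (∀ x, IsPureState (ξ x)) ∧
    ∀ x, ∀ ρ : Matrix dH dH ℂ, I.op x ρ = ((A.elem x * ρ).trace) • ξ x

/-- The identity and the three Pauli matrices on `ℂ²`. -/
def pauli : Fin 4 → Matrix (Fin 2) (Fin 2) ℂ :=
  ![1, !![0, 1; 1, 0], !![0, -Complex.I; Complex.I, 0], !![1, 0; 0, -1]]

/-!
By no information without disturbance, an operation from `H` to `H ⊗ V` whose marginal on `H` is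
part of a decomposition of the identity channel has the form `ρ ↦ ρ ⊗ ω`: its Choi matrix has a pure
marginal, and a positive matrix with a pure marginal is a product. Hence every operation of an
instrument compatible with the identity instrument sees `ρ` only through `tr ρ`, which a multiple of
`ρ ↦ σ ρ σ*` with `σ` unitary does not. On the other hand, the Pauli matrices are `d ^ 2` orthogonal
unitaries with `d = 2`, so their operations sum up to the completely depolarizing channel, whose
output can be appended to that of any other channel.
-/

section PartialTrace

open scoped MatrixOrder

theorem submatrix_mulVec_eq_zero_of_posSemidef {m n : Type*} [Fintype m] [Finite n]
    {M : Matrix n n ℂ} (hM : M.PosSemidef) (f : m → n) {u : m → ℂ}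
    (hu : star u ⬝ᵥ (M.submatrix f f *ᵥ u) = 0) : M.submatrix id f *ᵥ u = 0 := by
  have := Fintype.ofFinite n
  classical
  obtain ⟨B, rfl⟩ := CStarAlgebra.nonneg_iff_eq_star_mul_self.mp hM.nonneg
  rw [star_eq_conjTranspose, submatrix_mul _ _ _ id _ Function.bijective_id,
    ← mulVec_mulVec] at hu ⊢
  have hBu : B.submatrix id f *ᵥ u = 0 := by
    rwa [dotProduct_mulVec, ← conjTranspose_submatrix, vecMul_conjTranspose, star_star,
      dotProduct_star_self_eq_zero] at hu
  rw [hBu, mulVec_zero]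

theorem ptraceL_kronecker [Fintype dA] (ρ : Matrix dA dA ℂ) (ω : Matrix dK dK ℂ) :
    ptraceL (ρ ⊗ₖ ω) = ρ.trace • ω := by
  ext i j
  simp [ptraceL, trace, Finset.sum_mul]

theorem ptraceR_kronecker [Fintype dV] (ρ : Matrix dK dK ℂ) (ω : Matrix dV dV ℂ) :
    ptraceR (ρ ⊗ₖ ω) = ω.trace • ρ := by
  ext i j
  simp [ptraceR, trace, ← Finset.mul_sum, mul_comm]

theorem ptraceR_eq_sum_submatrix [Fintype dV] (M : Matrix (dK × dV) (dK × dV) ℂ) :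
    ptraceR M = ∑ v, M.submatrix (·, v) (·, v) := by
  ext i j
  simp [ptraceR, Matrix.sum_apply]

theorem posSemidef_ptraceR [Fintype dV] {M : Matrix (dK × dV) (dK × dV) ℂ}
    (hM : M.PosSemidef) : (ptraceR M).PosSemidef := by
  rw [ptraceR_eq_sum_submatrix]
  exact posSemidef_sum _ fun v _ => hM.submatrix _

variable [Fintype dV] {M : Matrix (dK × dV) (dK × dV) ℂ} {ψ : dK → ℂ}

theorem submatrix_mulVec_eq_zero_of_ptraceR_le [Fintype dK]
    (hM : M.PosSemidef) (hle : ptraceR M ≤ vecMulVec ψ (star ψ)) {u : dK → ℂ}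
    (hu : star ψ ⬝ᵥ u = 0) (v : dV) :
    M.submatrix id (·, v) *ᵥ u = 0 := by
  have hnonneg : ∀ w, 0 ≤ star u ⬝ᵥ (M.submatrix (·, w) (·, w) *ᵥ u) := fun w =>
    (hM.submatrix _).dotProduct_mulVec_nonneg u
  have hsum : ∑ w, star u ⬝ᵥ (M.submatrix (·, w) (·, w) *ᵥ u) = 0 := by
    refine le_antisymm ?_ (Finset.sum_nonneg fun w _ => hnonneg w)
    have h := (le_iff.mp hle).dotProduct_mulVec_nonneg u
    rwa [sub_mulVec, vecMulVec_mulVec, hu, MulOpposite.op_zero, zero_smul, zero_sub,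
      dotProduct_neg, neg_nonneg, ptraceR_eq_sum_submatrix, sum_mulVec, dotProduct_sum] at h
  exact submatrix_mulVec_eq_zero_of_posSemidef hM _
    ((Finset.sum_eq_zero_iff_of_nonneg fun w _ => hnonneg w).mp hsum v (Finset.mem_univ v))

theorem apply_eq_mul_of_ptraceR_le [Fintype dK]
    (hM : M.PosSemidef) (hle : ptraceR M ≤ vecMulVec ψ (star ψ)) (p : dK × dV) (b : dK) (w : dV) :
    M p (b, w) = (star ψ ⬝ᵥ ψ)⁻¹ * star (ψ b) * (M.submatrix id (·, w) *ᵥ ψ) p := by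
  classical
  -- `u` is the component of the `b`-th basis vector orthogonal to `ψ`.
  let u : dK → ℂ := Pi.single b 1 - ((star ψ ⬝ᵥ ψ)⁻¹ * star (ψ b)) • ψ
  have hu : star ψ ⬝ᵥ u = 0 := by
    obtain rfl | hψ := eq_or_ne ψ 0
    · simp
    · have : star ψ ⬝ᵥ ψ ≠ 0 := dotProduct_star_self_eq_zero.not.mpr hψ
      simp only [u, dotProduct_sub, dotProduct_smul, dotProduct_single_one, Pi.star_apply,
        smul_eq_mul]
      field_simp
      simp
  have h := congrFun (submatrix_mulVec_eq_zero_of_ptraceR_le hM hle hu w) p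
  simpa [u, mulVec_sub, mulVec_smul, sub_eq_zero] using h

theorem exists_eq_vecMulVec_kronecker_of_ptraceR_le [Finite dK]
    (hM : M.PosSemidef) (hle : ptraceR M ≤ vecMulVec ψ (star ψ)) :
    ∃ ω : Matrix dV dV ℂ, M = vecMulVec ψ (star ψ) ⊗ₖ ω := by
  have := Fintype.ofFinite dK
  set c : ℂ := (star ψ ⬝ᵥ ψ)⁻¹
  have hcol (p b w) : M p (b, w) = c * star (ψ b) * (M.submatrix id (·, w) *ᵥ ψ) p :=
    apply_eq_mul_of_ptraceR_le hM hle p b w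
  have hrow (a v q) : M (a, v) q = star c * ψ a * star ((M.submatrix id (·, v) *ᵥ ψ) q) := by
    rw [← hM.isHermitian.apply, hcol q a v, star_mul', star_mul', star_star]
  refine ⟨of fun v w => c * star c * ∑ b, star ((M.submatrix id (·, v) *ᵥ ψ) (b, w)) * ψ b, ?_⟩
  ext ⟨a, v⟩ ⟨b, w⟩
  rw [hcol, mulVec, dotProduct]
  simp only [submatrix_apply, id_eq, hrow, kroneckerMap_apply, vecMulVec_apply, of_apply,
    Pi.star_apply, Finset.mul_sum]
  exact Finset.sum_congr rfl fun _ _ => by ring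

end PartialTrace

section Operations

/-- The partial trace `ptraceR` over the second tensor factor as a super-operator. -/
def ptraceRMap [Fintype dV] : MatMap (dK × dV) dK where
  toFun := ptraceR
  map_add' M N := by ext; simp [ptraceR, Finset.sum_add_distrib]
  map_smul' c M := by ext; simp [ptraceR, Finset.mul_sum]

/-- The super-operator `ρ ↦ Φ(ρ) ⊗ ω`, which appends the operator `ω` to the output of `Φ`. -/
def MatMap.append (Φ : MatMap dH dK) (ω : Matrix dV dV ℂ) : MatMap dH (dK × dV) where
  toFun ρ := Φ ρ ⊗ₖ ω
  map_add' _ _ := by rw [map_add, add_kronecker]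
  map_smul' _ _ := by rw [map_smul, smul_kronecker, RingHom.id_apply]

@[simp]
theorem MatMap.append_apply (Φ : MatMap dH dK) (ω : Matrix dV dV ℂ) (ρ : Matrix dH dH ℂ) :
    Φ.append ω ρ = Φ ρ ⊗ₖ ω :=
  rfl

theorem IsTP.append [Fintype dH] [Fintype dK] [Fintype dV] {Φ : MatMap dH dK}
    (hΦ : IsTP Φ) {ω : Matrix dV dV ℂ} (hω : ω.trace = 1) : IsTP (Φ.append ω) := fun ρ => by
  rw [MatMap.append_apply, trace_kronecker, hω, mul_one, hΦ]

theorem MatMap.ext_of_isState [Fintype dH] {Φ Ψ : MatMap dH dK}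
    (h : ∀ ρ, IsState ρ → Φ ρ = Ψ ρ) : Φ = Ψ := by
  classical
  open scoped MatrixOrder Matrix.Norms.L2Operator in
  refine LinearMap.ext_on (CStarAlgebra.span_nonneg (A := Matrix dH dH ℂ)) fun A hA => ?_
  have hA : A.PosSemidef := nonneg_iff_posSemidef.mp hA
  obtain rfl | hA0 := eq_or_ne A 0
  · simp
  · have htr : A.trace ≠ 0 := hA.trace_eq_zero_iff.not.mpr hA0
    have hρ : IsState (A.trace⁻¹ • A) :=
      ⟨hA.smul (inv_nonneg.mpr hA.trace_nonneg), by simp [htr]⟩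
    simpa [htr] using h _ hρ

variable [DecidableEq dH]

theorem MatMap.ext_choiMatrix [Finite dH] {Φ Ψ : MatMap dH dK}
    (h : choiMatrix Φ = choiMatrix Ψ) : Φ = Ψ :=
  have := Fintype.ofFinite dH
  ext_linearMap _ fun i j => LinearMap.ext_ring <| by
    ext k l
    exact congrFun (congrFun h (i, k)) (j, l)

theorem choiMatrix_id :
    choiMatrix (LinearMap.id : MatMap dH dH) =
      vecMulVec (vec (1 : Matrix dH dH ℂ)) (star (vec (1 : Matrix dH dH ℂ))) := by
  ext ⟨i, k⟩ ⟨j, l⟩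
  simp [choiMatrix, single_apply, vecMulVec_apply, vec, one_apply, ← ite_and, eq_comm, and_comm]

theorem choiMatrix_append (Φ : MatMap dH dK) (ω : Matrix dV dV ℂ) :
    choiMatrix (Φ.append ω) =
      (choiMatrix Φ ⊗ₖ ω).submatrix (Equiv.prodAssoc _ _ _).symm (Equiv.prodAssoc _ _ _).symm :=
  rfl

theorem choiMatrix_ptraceRMap_comp [Fintype dV] (Φ : MatMap dH (dK × dV)) :
    choiMatrix (ptraceRMap ∘ₗ Φ) =
      ptraceR ((choiMatrix Φ).submatrix (Equiv.prodAssoc _ _ _) (Equiv.prodAssoc _ _ _)) :=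
  rfl

variable [Fintype dH] [Fintype dK]

theorem IsCP.sum {ι : Type*} {s : Finset ι} {Φ : ι → MatMap dH dK} (h : ∀ i ∈ s, IsCP (Φ i)) :
    IsCP (∑ i ∈ s, Φ i) := by
  have : choiMatrix (∑ i ∈ s, Φ i) = ∑ i ∈ s, choiMatrix (Φ i) := by
    ext p q
    simp [choiMatrix, Matrix.sum_apply]
  rw [IsCP, this]
  exact posSemidef_sum s h

theorem IsCP.append [Fintype dV] {Φ : MatMap dH dK} (hΦ : IsCP Φ) {ω : Matrix dV dV ℂ}
    (hω : ω.PosSemidef) : IsCP (Φ.append ω) := by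
  rw [IsCP, choiMatrix_append]
  exact (PosSemidef.kronecker hΦ hω).submatrix _

theorem IsCP.ptraceRMap_comp [Fintype dV] {Φ : MatMap dH (dK × dV)} (hΦ : IsCP Φ) :
    IsCP (ptraceRMap ∘ₗ Φ) := by
  rw [IsCP, choiMatrix_ptraceRMap_comp]
  exact posSemidef_ptraceR (hΦ.submatrix _)

theorem IsCP.exists_eq_append_id [Fintype dV] {Φ : MatMap dH (dH × dV)} (hΦ : IsCP Φ)
    (hle : IsCP (LinearMap.id - ptraceRMap ∘ₗ Φ)) :
    ∃ ω : Matrix dV dV ℂ, Φ = MatMap.append LinearMap.id ω := by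
  open scoped MatrixOrder in
  have hmarginal :
      ptraceR ((choiMatrix Φ).submatrix (Equiv.prodAssoc _ _ _) (Equiv.prodAssoc _ _ _)) ≤
        vecMulVec (vec (1 : Matrix dH dH ℂ)) (star (vec (1 : Matrix dH dH ℂ))) := by
    rw [← choiMatrix_ptraceRMap_comp, ← choiMatrix_id]
    exact hle
  obtain ⟨ω, hω⟩ := exists_eq_vecMulVec_kronecker_of_ptraceR_le (hΦ.submatrix _) hmarginal
  refine ⟨ω, MatMap.ext_choiMatrix ?_⟩
  rw [choiMatrix_append, choiMatrix_id, ← hω]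
  rfl

end Operations

section Compatibility

variable [Fintype Ω] [Fintype Λ] [Fintype dH] [DecidableEq dH] [Fintype dK] [Fintype dV]

theorem InsCompatible.exists_op_eq_trace_smul {I : Instrument Ω dH dH} {J : Instrument Λ dH dV}
    (h : InsCompatible I J) (hI : ∑ x, I.op x = LinearMap.id) :
    ∃ ω : Λ → Matrix dV dV ℂ, ∀ y ρ, J.op y ρ = ρ.trace • ω y := by
  classical
  obtain ⟨G, hJ, hI'⟩ := h
  have hG : ∑ p, ptraceRMap ∘ₗ G.op p = LinearMap.id := by
    rw [Fintype.sum_prod_type, ← hI]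
    refine Finset.sum_congr rfl fun x _ => MatMap.ext_of_isState fun ρ hρ => ?_
    rw [← hI' x ρ hρ, LinearMap.sum_apply]
    rfl
  have hproduct : ∀ p, ∃ ω, G.op p = MatMap.append LinearMap.id ω := fun p => by
    refine (G.cp p).exists_eq_append_id ?_
    rw [← hG, ← Finset.sum_erase_eq_sub (Finset.mem_univ p)]
    exact IsCP.sum fun q _ => (G.cp q).ptraceRMap_comp
  choose ω hω using hproduct
  refine ⟨fun y => ∑ x, ω (x, y), fun y ρ => ?_⟩
  have hJy : J.op y = (traceLinearMap dH ℂ ℂ).smulRight (∑ x, ω (x, y)) :=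
    MatMap.ext_of_isState fun ρ hρ => by
      simp [← hJ y ρ hρ, hω, ptraceL_kronecker, Finset.smul_sum]
  rw [hJy]
  rfl

theorem ChCompatible.of_trace_smul (Φ : Channel dH dK) {Ψ : Channel dH dV} {ω : Matrix dV dV ℂ}
    (hω : IsState ω) (hΨ : ∀ ρ, Ψ.map ρ = ρ.trace • ω) : ChCompatible Φ Ψ :=
  ⟨⟨Φ.map.append ω, Φ.cp.append hω.1, Φ.tp.append hω.2⟩,
    fun ρ _ => by rw [MatMap.append_apply, ptraceL_kronecker, Φ.tp, hΨ],
    fun ρ _ => by rw [MatMap.append_apply, ptraceR_kronecker, hω.2, one_smul]⟩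

theorem POVMCompatible.of_unique [Unique Ω] (A : POVM Ω dH) (B : POVM Λ dH) :
    POVMCompatible A B := by
  have hA : A.elem default = 1 := by simpa using A.sum_eq
  refine ⟨⟨fun p => B.elem p.2, fun p => B.pos p.2, ?_⟩, fun y => ?_, fun x => ?_⟩
  · simpa [Fintype.sum_prod_type] using B.sum_eq
  · simp
  · rw [Unique.eq_default x, hA, B.sum_eq]

end Compatibility

section UnitaryErrorBasis

/-- A unitary error basis: a family of `d ^ 2` unitary `d × d` matrices that are pairwise orthogonal
for the Hilbert–Schmidt inner product `tr (A* B)`. The Pauli matrices are the case `d = 2`. -/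
structure IsUnitaryErrorBasis [Fintype Λ] [Fintype dH] [DecidableEq dH]
    (U : Λ → Matrix dH dH ℂ) : Prop where
  card_eq : Fintype.card Λ = Fintype.card dH ^ 2
  mem_unitaryGroup : ∀ i, U i ∈ unitaryGroup dH ℂ
  trace_eq_zero : Pairwise fun i j => ((U i)ᴴ * U j).trace = 0

variable [Fintype Λ] [Fintype dH] [DecidableEq dH] {U : Λ → Matrix dH dH ℂ}

theorem IsUnitaryErrorBasis.trace_conjTranspose_mul [DecidableEq Λ] (hU : IsUnitaryErrorBasis U)
    (i j : Λ) : ((U i)ᴴ * U j).trace = if i = j then (Fintype.card dH : ℂ) else 0 := by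
  split_ifs with hij
  · rw [← hij, ← star_eq_conjTranspose, mem_unitaryGroup_iff'.mp (hU.mem_unitaryGroup i), trace_one]
  · exact hU.trace_eq_zero hij

theorem IsUnitaryErrorBasis.sum_apply_mul_star_apply (hU : IsUnitaryErrorBasis U)
    (a b c d : dH) :
    ∑ i, U i a b * star (U i c d) = if a = c ∧ b = d then (Fintype.card dH : ℂ) else 0 := by
  classical
  have hcard : (Fintype.card dH : ℂ) ≠ 0 := Nat.cast_ne_zero.mpr (Fintype.card_pos_iff.mpr ⟨a⟩).ne'
  let W : Matrix (dH × dH) Λ ℂ := of fun p i => vec (U i) p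
  have hleft : ((Fintype.card dH : ℂ)⁻¹ • Wᴴ) * W = 1 := by
    ext i j
    have h : (Wᴴ * W) i j = ((U i)ᴴ * U j).trace := star_vec_dotProduct_vec (U i) (U j)
    rw [smul_mul, Matrix.smul_apply, h, hU.trace_conjTranspose_mul, one_apply]
    simp [hcard]
  -- `W` is square, so the orthogonality of its columns passes to its rows.
  have hright : W * ((Fintype.card dH : ℂ)⁻¹ • Wᴴ) = 1 :=
    (mul_eq_one_comm_of_card_eq _ _ _ (by simp [hU.card_eq, sq])).mp hleft
  have hentry : (Fintype.card dH : ℂ)⁻¹ * ∑ i, U i a b * star (U i c d) =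
      if a = c ∧ b = d then 1 else 0 := by
    rw [Matrix.mul_smul] at hright
    simpa only [W, Matrix.smul_apply, smul_eq_mul, mul_apply, conjTranspose_apply, of_apply, vec,
      one_apply, Prod.mk.injEq, and_comm] using congrFun (congrFun hright (b, a)) (d, c)
  rw [(inv_mul_eq_iff_eq_mul₀ hcard).mp hentry, mul_ite, mul_one, mul_zero]

theorem IsUnitaryErrorBasis.sum_mul_mul_conjTranspose (hU : IsUnitaryErrorBasis U)
    (ρ : Matrix dH dH ℂ) :
    ∑ i, U i * ρ * (U i)ᴴ = (Fintype.card dH * ρ.trace) • 1 := by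
  ext a c
  calc (∑ i, U i * ρ * (U i)ᴴ) a c
      = ∑ i, ∑ d, ∑ b, ρ b d * (U i a b * star (U i c d)) := by
        simp only [Matrix.sum_apply, mul_apply, conjTranspose_apply, Finset.sum_mul]
        exact Finset.sum_congr rfl fun _ _ => Finset.sum_congr rfl fun _ _ =>
          Finset.sum_congr rfl fun _ _ => by ring
    _ = ∑ d, ∑ b, ρ b d * ∑ i, U i a b * star (U i c d) := by
        simp only [Finset.mul_sum]
        rw [Finset.sum_comm]
        exact Finset.sum_congr rfl fun _ _ => Finset.sum_comm
    _ = ((Fintype.card dH * ρ.trace) • (1 : Matrix dH dH ℂ)) a c := by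
        simp only [hU.sum_apply_mul_star_apply]
        by_cases hac : a = c <;> simp [hac, trace, ← Finset.sum_mul, mul_comm]

theorem conjTranspose_pauli (i : Fin 4) : (pauli i)ᴴ = pauli i := by
  fin_cases i <;> ext k l <;> fin_cases k <;> fin_cases l <;> simp [pauli]

theorem isUnitaryErrorBasis_pauli : IsUnitaryErrorBasis pauli where
  card_eq := by simp
  mem_unitaryGroup i := by
    rw [mem_unitaryGroup_iff, star_eq_conjTranspose, conjTranspose_pauli]
    fin_cases i <;> simp [pauli, one_fin_two]
  trace_eq_zero i j hij := by
    simp only [conjTranspose_pauli]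
    fin_cases i <;> fin_cases j <;> simp [pauli, trace_fin_two] at hij ⊢

end UnitaryErrorBasis

theorem isState_maximallyMixed [Fintype dH] [DecidableEq dH] [Nonempty dH] :
    IsState ((Fintype.card dH : ℂ)⁻¹ • (1 : Matrix dH dH ℂ)) :=
  ⟨PosSemidef.one.smul (by positivity), by simp⟩

theorem mul_mul_conjTranspose_eq_zero_iff [Fintype dH] [DecidableEq dH] {U ρ : Matrix dH dH ℂ}
    (hU : U ∈ unitaryGroup dH ℂ) : U * ρ * Uᴴ = 0 ↔ ρ = 0 := by
  refine ⟨fun h => ?_, fun h => by simp [h]⟩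
  have hUU : Uᴴ * U = 1 := mem_unitaryGroup_iff'.mp hU
  calc ρ = (Uᴴ * U) * ρ * (Uᴴ * U) := by rw [hUU, Matrix.one_mul, Matrix.mul_one]
    _ = Uᴴ * (U * ρ * Uᴴ) * U := by simp only [Matrix.mul_assoc]
    _ = 0 := by rw [h, Matrix.mul_zero, Matrix.zero_mul]

theorem identity_and_pauli_twirl_incompatible_general
    [Fintype Ω] [Unique Ω] [Fintype Λ] [Fintype dH] [DecidableEq dH] [Nontrivial dH]
    (I : Instrument Ω dH dH) (hI : ∀ ρ, I.op default ρ = ρ)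
    {U : Λ → Matrix dH dH ℂ} (hU : IsUnitaryErrorBasis U) (J : Instrument Λ dH dH)
    (hJ : ∀ i ρ, J.op i ρ = ((Fintype.card dH : ℂ) ^ 2)⁻¹ • (U i * ρ * (U i)ᴴ))
    (ΦI : Channel dH dH) (hΦI : ΦI.map = ∑ x, I.op x)
    (ΦJ : Channel dH dH) (hΦJ : ΦJ.map = ∑ y, J.op y)
    (AI : POVM Ω dH) (hAI : ∀ x, AI.elem x = dualId (I.op x))
    (AJ : POVM Λ dH) (hAJ : ∀ y, AJ.elem y = dualId (J.op y)) :
    ¬ InsCompatible I J ∧ ChCompatible ΦI ΦJ ∧ POVMCompatible AI AJ := by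
  refine ⟨fun h => ?_, .of_trace_smul ΦI isState_maximallyMixed fun ρ => ?_, .of_unique AI AJ⟩
  · obtain ⟨ω, hω⟩ := h.exists_op_eq_trace_smul (by simpa using LinearMap.ext hI)
    obtain ⟨a, b, hab⟩ := exists_pair_ne dH
    have : Nonempty Λ := Fintype.card_pos_iff.mp (by simp [hU.card_eq, Fintype.card_pos])
    obtain ⟨y⟩ := this
    have hzero : J.op y (single a b 1) = 0 := by
      rw [hω, trace_single_eq_of_ne _ _ _ hab, zero_smul]
    rw [hJ, smul_eq_zero_iff_right (by simp),
      mul_mul_conjTranspose_eq_zero_iff (hU.mem_unitaryGroup y)] at hzero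
    simpa using congrFun (congrFun hzero a) b
  · simp only [hΦJ, LinearMap.sum_apply, hJ, ← Finset.smul_sum, hU.sum_mul_mul_conjTranspose,
      smul_smul]
    congr 1
    field_simp

/-- The qubit identity instrument `I` and the instrument
`J_i(ρ) = (1/4) σ_i ρ σ_i` are incompatible, although their induced channels are
compatible and their induced POVMs are compatible. -/
theorem identity_and_pauli_twirl_incompatible
    (I : Instrument (Fin 1) (Fin 2) (Fin 2))
    (hI : ∀ ρ : Matrix (Fin 2) (Fin 2) ℂ, I.op 0 ρ = ρ)
    (J : Instrument (Fin 4) (Fin 2) (Fin 2))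
    (hJ : ∀ i, ∀ ρ : Matrix (Fin 2) (Fin 2) ℂ,
      J.op i ρ = (1 / 4 : ℂ) • (pauli i * ρ * pauli i))
    (ΦI : Channel (Fin 2) (Fin 2)) (hΦI : ΦI.map = ∑ x, I.op x)
    (ΦJ : Channel (Fin 2) (Fin 2)) (hΦJ : ΦJ.map = ∑ y, J.op y)
    (AI : POVM (Fin 1) (Fin 2)) (hAI : ∀ x, AI.elem x = dualId (I.op x))
    (AJ : POVM (Fin 4) (Fin 2)) (hAJ : ∀ y, AJ.elem y = dualId (J.op y)) :
    ¬ InsCompatible I J ∧ ChCompatible ΦI ΦJ ∧ POVMCompatible AI AJ :=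
  identity_and_pauli_twirl_incompatible_general I hI isUnitaryErrorBasis_pauli J
    (fun i ρ => by rw [hJ, conjTranspose_pauli]; norm_num) ΦI hΦI ΦJ hΦJ AI hAI AJ hAJ
end
end

section
/- Let I ∈ Ins(Ω,H,K) and J ∈ Ins(Λ,H,V) be two instruments. If I is a postprocessing of J (I ⪯ J), then I is compatible with the induced POVM A^J; in particular, Φ^I is compatible with A^J and A^I is compatible with A^J. -/
open scoped Kronecker ComplexOrder
open Matrix

noncomputable section

variable {Ω Λ dH dK dV dA dA' : Type}

/-!
Measure `J` and then, conditionally on the outcome `y`, apply `R^(y)`: this is an instrument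
`G_(y,x) = R^(y)_x ∘ J_y`. Summing over `y` gives `I_x`. Summing over `x` leaves a
trace-preserving map after `J_y`, which does not change its effect, so the other margin is `A^J`.
The statements on `Φ^I` and `A^I` follow by summing `G` over `x` and by taking its induced POVM.
That `G` is completely positive is read off from Kraus decompositions.
-/

section CompletelyPositive

variable {ι : Type*}

theorem choiMatrix_injective [Finite dH] [DecidableEq dH] :
    Function.Injective (choiMatrix : MatMap dH dK → _) := by
  intro Φ Ψ h
  refine Matrix.ext_linearMap ℂ fun i j => LinearMap.ext_ring ?_
  ext k l
  exact congrFun₂ h (i, k) (j, l)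

theorem choiMatrix_sum [DecidableEq dH] (s : Finset ι) (Φ : ι → MatMap dH dK) :
    choiMatrix (∑ r ∈ s, Φ r) = ∑ r ∈ s, choiMatrix (Φ r) := by
  ext p q
  simp only [choiMatrix, LinearMap.sum_apply, Matrix.sum_apply]

/-- Conjugation `ρ ↦ V ρ V*`, the super-operator with the single Kraus operator `V`. -/
def conjMap [Fintype dH] (V : Matrix dK dH ℂ) : MatMap dH dK :=
  mulRightLinearMap dK ℂ Vᴴ ∘ₗ mulLeftLinearMap dH ℂ V

theorem conjMap_apply [Fintype dH] (V : Matrix dK dH ℂ) (ρ : Matrix dH dH ℂ) :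
    conjMap V ρ = V * ρ * Vᴴ :=
  rfl

theorem conjMap_comp [Fintype dH] [Fintype dV] (W : Matrix dK dV ℂ) (V : Matrix dV dH ℂ) :
    conjMap W ∘ₗ conjMap V = conjMap (W * V) := by
  ext1 ρ
  simp only [LinearMap.comp_apply, conjMap_apply, conjTranspose_mul, Matrix.mul_assoc]

theorem choiMatrix_conjMap [Fintype dH] [DecidableEq dH] (V : Matrix dK dH ℂ) :
    choiMatrix (conjMap V) = vecMulVec V.vec (star V.vec) := by
  ext ⟨i, k⟩ ⟨j, l⟩
  simp [choiMatrix, conjMap_apply, Matrix.mul_apply, Matrix.single_apply, vecMulVec_apply, vec,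
    ite_and]

variable [Fintype dH] [DecidableEq dH] [Fintype dK]

theorem isCP_sum {s : Finset ι} {Φ : ι → MatMap dH dK} (hΦ : ∀ r ∈ s, IsCP (Φ r)) :
    IsCP (∑ r ∈ s, Φ r) := by
  rw [IsCP, choiMatrix_sum]
  exact posSemidef_sum s hΦ

theorem isCP_conjMap (V : Matrix dK dH ℂ) : IsCP (conjMap V) := by
  rw [IsCP, choiMatrix_conjMap]
  exact posSemidef_vecMulVec_self_star V.vec

theorem IsCP.exists_eq_sum_conjMap {Φ : MatMap dH dK} (hΦ : IsCP Φ) :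
    ∃ (m : ℕ) (V : Fin m → Matrix dK dH ℂ), Φ = ∑ r, conjMap (V r) := by
  obtain ⟨m, v, hv⟩ := posSemidef_iff_eq_sum_vecMulVec.mp hΦ
  choose V hV using fun r => vec_bijective.surjective (v r)
  refine ⟨m, V, choiMatrix_injective ?_⟩
  simp only [choiMatrix_sum, choiMatrix_conjMap, hV, hv]

theorem IsCP.comp [Fintype dV] [DecidableEq dV] {Ψ : MatMap dV dK} {Φ : MatMap dH dV}
    (hΨ : IsCP Ψ) (hΦ : IsCP Φ) : IsCP (Ψ ∘ₗ Φ) := by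
  obtain ⟨m, W, rfl⟩ := hΨ.exists_eq_sum_conjMap
  obtain ⟨n, V, rfl⟩ := hΦ.exists_eq_sum_conjMap
  have kraus : (∑ s, conjMap (W s)) ∘ₗ ∑ r, conjMap (V r) = ∑ r, ∑ s, conjMap (W s * V r) := by
    ext1 ρ
    simp only [← conjMap_comp, LinearMap.comp_apply, LinearMap.sum_apply, map_sum]
  rw [kraus]
  exact isCP_sum fun r _ => isCP_sum fun s _ => isCP_conjMap (W s * V r)

theorem IsCP.map_posSemidef {Φ : MatMap dH dK} (hΦ : IsCP Φ) {ρ : Matrix dH dH ℂ}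
    (hρ : ρ.PosSemidef) : (Φ ρ).PosSemidef := by
  obtain ⟨m, V, rfl⟩ := hΦ.exists_eq_sum_conjMap
  rw [LinearMap.sum_apply]
  exact posSemidef_sum _ fun r _ => hρ.mul_mul_conjTranspose_same (V r)

theorem isTNI_of_isTP_sum [Fintype Ω] {Φ : Ω → MatMap dH dK} (hcp : ∀ x, IsCP (Φ x))
    (htp : IsTP (∑ x, Φ x)) (x : Ω) : IsTNI (Φ x) := by
  intro ρ hρ
  rw [← htp ρ, LinearMap.sum_apply, trace_sum]
  exact Finset.single_le_sum (f := fun x => (Φ x ρ).trace)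
    (fun x _ => ((hcp x).map_posSemidef hρ).trace_nonneg) (Finset.mem_univ x)

end CompletelyPositive

section Effect

variable {ι : Type*} [Fintype dH] [DecidableEq dH] [Fintype dK]

theorem dualId_eq_of_trace_mul {Φ : MatMap dH dK} {A : Matrix dH dH ℂ}
    (h : ∀ ρ, (A * ρ).trace = (Φ ρ).trace) : dualId Φ = A := by
  ext i j
  simpa [dualId, trace_mul_single] using (h (single j i 1)).symm

theorem dualId_sum (s : Finset ι) (Φ : ι → MatMap dH dK) :
    dualId (∑ r ∈ s, Φ r) = ∑ r ∈ s, dualId (Φ r) := by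
  ext i j
  simp only [dualId, LinearMap.sum_apply, trace_sum, Matrix.sum_apply]

theorem dualId_conjMap (V : Matrix dK dH ℂ) : dualId (conjMap V) = Vᴴ * V :=
  dualId_eq_of_trace_mul fun ρ => by rw [conjMap_apply, trace_mul_cycle V]

theorem IsCP.dualId_posSemidef {Φ : MatMap dH dK} (hΦ : IsCP Φ) : (dualId Φ).PosSemidef := by
  obtain ⟨m, V, rfl⟩ := hΦ.exists_eq_sum_conjMap
  simp only [dualId_sum, dualId_conjMap]
  exact posSemidef_sum _ fun r _ => posSemidef_conjTranspose_mul_self (V r)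

theorem IsTP.dualId_eq_one {Φ : MatMap dH dK} (hΦ : IsTP Φ) : dualId Φ = 1 :=
  dualId_eq_of_trace_mul fun ρ => by rw [one_mul, hΦ]

theorem IsTP.dualId_comp [Fintype dV] {Ψ : MatMap dV dK} (hΨ : IsTP Ψ) (Φ : MatMap dH dV) :
    dualId (Ψ ∘ₗ Φ) = dualId Φ := by
  ext i j
  exact hΨ (Φ (single j i 1))

end Effect

section Instruments

variable [Fintype Ω] [Fintype Λ] [Fintype dH] [DecidableEq dH] [Fintype dK]
  [Fintype dV] [DecidableEq dV]

/-- The instrument given by completely positive maps whose sum is trace-preserving; that each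
of them is trace-nonincreasing is then automatic. -/
def Instrument.ofIsTP (Φ : Ω → MatMap dH dK) (hcp : ∀ x, IsCP (Φ x))
    (htp : IsTP (∑ x, Φ x)) : Instrument Ω dH dK where
  op := Φ
  cp := hcp
  tni := isTNI_of_isTP_sum hcp htp
  tp := htp

/-- The first margin of an instrument with a product outcome set: the second outcome is
discarded. -/
def Instrument.fstMargin (G : Instrument (Ω × Λ) dH dK) : Instrument Ω dH dK :=
  .ofIsTP (fun x => ∑ y, G.op (x, y)) (fun x => isCP_sum fun y _ => G.cp (x, y)) <| by
    rw [← Fintype.sum_prod_type]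
    exact G.tp

/-- Sequential measurement: `J` is followed by the instrument `R y` chosen according to the
outcome `y` of `J`, and both outcomes are recorded. -/
def Instrument.seq (J : Instrument Λ dH dV) (R : Λ → Instrument Ω dV dK) :
    Instrument (Λ × Ω) dH dK :=
  .ofIsTP (fun p => (R p.1).op p.2 ∘ₗ J.op p.1) (fun p => ((R p.1).cp p.2).comp (J.cp p.1)) <| by
    intro ρ
    calc ((∑ p : Λ × Ω, (R p.1).op p.2 ∘ₗ J.op p.1) ρ).trace
      _ = ∑ y, ((∑ x, (R y).op x) (J.op y ρ)).trace := by
        simp only [Fintype.sum_prod_type, LinearMap.sum_apply, LinearMap.comp_apply, trace_sum]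
      _ = ∑ y, (J.op y ρ).trace := Finset.sum_congr rfl fun y _ => (R y).tp (J.op y ρ)
      _ = ρ.trace := by rw [← trace_sum, ← LinearMap.sum_apply, J.tp ρ]

theorem Instrument.seq_op (J : Instrument Λ dH dV) (R : Λ → Instrument Ω dV dK) (p : Λ × Ω) :
    (J.seq R).op p = (R p.1).op p.2 ∘ₗ J.op p.1 :=
  rfl

theorem Instrument.sum_dualId_seq (J : Instrument Λ dH dV) (R : Λ → Instrument Ω dV dK) (y : Λ) :
    ∑ x, dualId ((J.seq R).op (y, x)) = dualId (J.op y) := by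
  have hsum : ∑ x, (J.seq R).op (y, x) = (∑ x, (R y).op x) ∘ₗ J.op y := by
    ext1 ρ
    simp only [Instrument.seq_op, LinearMap.sum_apply, LinearMap.comp_apply]
  rw [← dualId_sum, hsum, (R y).tp.dualId_comp]

/-- The POVM `A^I` induced by an instrument `I`. -/
def Instrument.inducedPOVM (I : Instrument Ω dH dK) : POVM Ω dH where
  elem x := dualId (I.op x)
  pos x := (I.cp x).dualId_posSemidef
  sum_eq := by rw [← dualId_sum, I.tp.dualId_eq_one]

/-- Relabelling of the outcomes of a POVM along a bijection. -/
def POVM.reindex (e : Ω ≃ Λ) (A : POVM Ω dH) : POVM Λ dH where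
  elem y := A.elem (e.symm y)
  pos y := A.pos (e.symm y)
  sum_eq := by rw [e.symm.sum_comp A.elem, A.sum_eq]

end Instruments

section Compatibility

variable [Fintype Ω] [Fintype Λ] [Fintype dH] [DecidableEq dH] [Fintype dK]
  [Fintype dV] [DecidableEq dV]

theorem POVMCompatible.symm {A : POVM Ω dH} {B : POVM Λ dH} (h : POVMCompatible A B) :
    POVMCompatible B A := by
  obtain ⟨G, hB, hA⟩ := h
  exact ⟨G.reindex (Equiv.prodComm Ω Λ), hA, hB⟩

theorem POVMInsCompatible.povmChCompatible {A : POVM Ω dH} {J : Instrument Λ dH dK}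
    (h : POVMInsCompatible A J) {Ψ : Channel dH dK} (hΨ : Ψ.map = ∑ y, J.op y) :
    POVMChCompatible A Ψ := by
  obtain ⟨G, hJ, hA⟩ := h
  refine ⟨G.fstMargin, ?_, fun x => (dualId_sum _ _).trans (hA x)⟩
  calc ∑ x, ∑ y, G.op (x, y)
    _ = ∑ y, ∑ x, G.op (x, y) := Finset.sum_comm
    _ = Ψ.map := by simp only [hJ, hΨ]

theorem POVMInsCompatible.povmCompatible {A : POVM Ω dH} {J : Instrument Λ dH dK}
    (h : POVMInsCompatible A J) {B : POVM Λ dH} (hB : ∀ y, B.elem y = dualId (J.op y)) :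
    POVMCompatible A B := by
  obtain ⟨G, hJ, hA⟩ := h
  refine ⟨G.inducedPOVM, fun y => ?_, hA⟩
  rw [hB, ← hJ, dualId_sum]
  rfl

theorem Postprocessed.povmInsCompatible {I : Instrument Ω dH dK} {J : Instrument Λ dH dV}
    (h : Postprocessed I J) {A : POVM Λ dH} (hA : ∀ y, A.elem y = dualId (J.op y)) :
    POVMInsCompatible A I := by
  obtain ⟨R, hR⟩ := h
  exact ⟨J.seq R, fun x => (hR x).symm, fun y => (J.sum_dualId_seq R y).trans (hA y).symm⟩

end Compatibility

/-- If `I` is a postprocessing of `J`, then `I` is compatible with the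
induced POVM `A^J`; in particular `Φ^I` is compatible with `A^J` and `A^I` is
compatible with `A^J`. -/
theorem postprocessing_implies_povm_compatibility
    [Fintype Ω] [Fintype Λ] [Fintype dH] [DecidableEq dH] [Fintype dK] [DecidableEq dK]
    [Fintype dV] [DecidableEq dV]
    (I : Instrument Ω dH dK) (J : Instrument Λ dH dV)
    (AI : POVM Ω dH) (hAI : ∀ x, AI.elem x = dualId (I.op x))
    (AJ : POVM Λ dH) (hAJ : ∀ y, AJ.elem y = dualId (J.op y))
    (ΦI : Channel dH dK) (hΦI : ΦI.map = ∑ x, I.op x)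
    (hpp : Postprocessed I J) :
    POVMInsCompatible AJ I ∧ POVMChCompatible AJ ΦI ∧ POVMCompatible AI AJ := by
  have hcompat : POVMInsCompatible AJ I := hpp.povmInsCompatible hAJ
  exact ⟨hcompat, hcompat.povmChCompatible hΦI, (hcompat.povmCompatible hAI).symm⟩
end
end
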